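/- Let F be a Minkowski norm on ℝⁿ, let Ω ⊆ ℝⁿ be an open set with smooth boundary such that Ω^c is bounded, let 1 < p < n, and let u_p be the C¹ weak solution of div(F(∇u)^{p−1} F_ξ(∇u)) = F(∇u)^p in Ω with u_p = 0 on ∂Ω and u_p → +∞ at infinity. If x ∈ ∂Ω and there is a Wulff shape W_r(x₀) ⊆ Ω^c with x ∈ ∂W_r(x₀), then F(∇u_p(x)) ≤ (n−p)/r. -/

import Mathlib

open MeasureTheory Filter Topology Metric Set
open scoped RealInnerProductSpace NNReal

noncomputable section

abbrev En (n : ℕ) := EuclideanSpace ℝ (Fin n)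

/-- A Minkowski norm on ℝⁿ: a norm (convex, even, 1-homogeneous, positive away from 0)
which is smooth away from the origin and whose Hessian of `F²/2` is positive definite
on `ℝⁿ \ {0}`. -/
structure MinkowskiNorm (n : ℕ) where
  F : En n → ℝ
  convexOn : ConvexOn ℝ Set.univ F
  even : ∀ ξ, F (-ξ) = F ξ
  homog : ∀ c : ℝ, 0 ≤ c → ∀ ξ, F (c • ξ) = c * F ξ
  pos : ∀ ξ : En n, ξ ≠ 0 → 0 < F ξ
  smooth : ContDiffOn ℝ (⊤ : ℕ∞) F {(0 : En n)}ᶜ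
  elliptic : ∀ ξ : En n, ξ ≠ 0 → ∀ v : En n, v ≠ 0 →
    0 < fderiv ℝ (fun x => fderiv ℝ (fun y => F y ^ 2 / 2) x) ξ v v

/-- Locally Lipschitz on a set (i.e. `C^{0,1}_loc`). -/
def LocLipOn {n : ℕ} (f : En n → ℝ) (s : Set (En n)) : Prop :=
  ∀ x ∈ s, ∃ (K : ℝ≥0) (t : Set (En n)), t ∈ nhdsWithin x s ∧ LipschitzOnWith K f t

/-- Weak solution of `div(F_ξ(∇u)) = F(∇u)` in `Ω` in the sense of Huisken–Ilmanen's
minimization principle. -/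
def IsWeakSolIAMCF {n : ℕ} (N : MinkowskiNorm n) (Ω : Set (En n)) (u : En n → ℝ) : Prop :=
  LocLipOn u Ω ∧
  ∀ K : Set (En n), IsCompact (closure K) → closure K ⊆ Ω →
    ∀ φ : En n → ℝ, LocLipOn φ Ω → (∀ x ∈ Ω \ K, φ x = u x) →
      (∫ x in K, (N.F (gradient u x) + u x * N.F (gradient u x))) ≤
        ∫ x in K, (N.F (gradient φ x) + φ x * N.F (gradient u x))

/-- Weak subsolution: the minimization inequality holds for competitors `φ ≤ u`. -/
def IsWeakSubSolIAMCF {n : ℕ} (N : MinkowskiNorm n) (Ω : Set (En n)) (u : En n → ℝ) : Prop :=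
  LocLipOn u Ω ∧
  ∀ K : Set (En n), IsCompact (closure K) → closure K ⊆ Ω →
    ∀ φ : En n → ℝ, LocLipOn φ Ω → (∀ x ∈ Ω \ K, φ x = u x) → (∀ x ∈ Ω, φ x ≤ u x) →
      (∫ x in K, (N.F (gradient u x) + u x * N.F (gradient u x))) ≤
        ∫ x in K, (N.F (gradient φ x) + φ x * N.F (gradient u x))

/-- Weak supersolution: the minimization inequality holds for competitors `φ ≥ u`. -/
def IsWeakSuperSolIAMCF {n : ℕ} (N : MinkowskiNorm n) (Ω : Set (En n)) (u : En n → ℝ) : Prop :=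
  LocLipOn u Ω ∧
  ∀ K : Set (En n), IsCompact (closure K) → closure K ⊆ Ω →
    ∀ φ : En n → ℝ, LocLipOn φ Ω → (∀ x ∈ Ω \ K, φ x = u x) → (∀ x ∈ Ω, u x ≤ φ x) →
      (∫ x in K, (N.F (gradient u x) + u x * N.F (gradient u x))) ≤
        ∫ x in K, (N.F (gradient φ x) + φ x * N.F (gradient u x))

/-- A smooth compactly supported test function on `Ω`. -/
def IsTestFun {n : ℕ} (Ω : Set (En n)) (ψ : En n → ℝ) : Prop :=
  ContDiff ℝ (⊤ : ℕ∞) ψ ∧ HasCompactSupport ψ ∧ tsupport ψ ⊆ Ω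

/-- Weak solution of the Finsler `p`-Laplace equation `div(F(∇v)^{p-1} F_ξ(∇v)) = 0` in `Ω`. -/
def IsWeakPHarmonic {n : ℕ} (N : MinkowskiNorm n) (Ω : Set (En n)) (p : ℝ)
    (v : En n → ℝ) : Prop :=
  ∀ ψ : En n → ℝ, IsTestFun Ω ψ →
    (∫ x in Ω, N.F (gradient v x) ^ (p - 1) *
      ⟪gradient N.F (gradient v x), gradient ψ x⟫) = 0

/-- Weak solution of `div(F(∇u)^{p-1} F_ξ(∇u)) = F(∇u)^p` in `Ω`. -/
def IsWeakPSol {n : ℕ} (N : MinkowskiNorm n) (Ω : Set (En n)) (p : ℝ)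
    (u : En n → ℝ) : Prop :=
  ∀ ψ : En n → ℝ, IsTestFun Ω ψ →
    (∫ x in Ω, N.F (gradient u x) ^ (p - 1) *
      ⟪gradient N.F (gradient u x), gradient ψ x⟫) =
      - ∫ x in Ω, N.F (gradient u x) ^ p * ψ x

/-- The polar (dual) norm `F^o(x) = sup_{ξ ≠ 0} ⟨ξ, x⟩ / F(ξ)`. -/
def polarF {n : ℕ} (N : MinkowskiNorm n) (x : En n) : ℝ :=
  sSup {c : ℝ | ∃ ξ : En n, ξ ≠ 0 ∧ c = ⟪ξ, x⟫ / N.F ξ}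

/-- The Wulff shape of radius `r` centered at `x₀`: `{x : F^o(x - x₀) < r}`. -/
def Wulff {n : ℕ} (N : MinkowskiNorm n) (r : ℝ) (x₀ : En n) : Set (En n) :=
  {x | polarF N (x - x₀) < r}

/-- `Ω` is an open set with smooth boundary: it is a smooth sublevel set of a smooth
function with nonvanishing gradient on the boundary. -/
def HasSmoothBoundary {n : ℕ} (Ω : Set (En n)) : Prop :=
  ∃ f : En n → ℝ, ContDiff ℝ (⊤ : ℕ∞) f ∧ Ω = {x | f x < 0} ∧
    ∀ x ∈ frontier Ω, fderiv ℝ f x ≠ 0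

/-- `C¹` on `s` with locally Hölder continuous gradient (i.e. `C^{1,α}_loc`). -/
def C1LocHolderOn {n : ℕ} (v : En n → ℝ) (s : Set (En n)) : Prop :=
  ContDiffOn ℝ 1 v s ∧
  ∀ x ∈ s, ∃ (α C : ℝ≥0), 0 < α ∧ (α : ℝ) ≤ 1 ∧
    ∃ t ∈ nhdsWithin x s, HolderOnWith C α (fun y => gradient v y) t

/-- Divergence of a vector field on `ℝⁿ`. -/
def divg {n : ℕ} (V : En n → En n) (x : En n) : ℝ :=
  ∑ i : Fin n, fderiv ℝ V x (EuclideanSpace.single i 1) i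


namespace MinkowskiNorm

variable {n : ℕ} (N : MinkowskiNorm n)

lemma F_zero : N.F 0 = 0 := by
  have := N.homog 0 le_rfl 0
  simpa using this

lemma F_nonneg (ξ : En n) : 0 ≤ N.F ξ := by
  by_cases h : ξ = 0
  · rw [h, N.F_zero]
  · exact (N.pos ξ h).le

lemma F_eq_zero {ξ : En n} (h : N.F ξ = 0) : ξ = 0 := by
  by_contra h'
  exact (N.pos ξ h').ne' h

lemma F_add_le (ξ η : En n) : N.F (ξ + η) ≤ N.F ξ + N.F η := by
  have h := N.convexOn.2 (mem_univ ξ) (mem_univ η) (by norm_num : (0:ℝ) ≤ 1/2)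
    (by norm_num : (0:ℝ) ≤ 1/2) (by norm_num)
  rw [← smul_add, N.homog _ (by norm_num)] at h
  simp only [smul_eq_mul] at h
  linarith

lemma F_cont : Continuous N.F := by
  have := N.convexOn.continuousOn isOpen_univ
  exact continuousOn_univ.mp this

lemma exists_lower : ∃ c : ℝ, 0 < c ∧ ∀ ξ : En n, c * ‖ξ‖ ≤ N.F ξ := by
  rcases (sphere (0 : En n) 1).eq_empty_or_nonempty with h | h
  · refine ⟨1, one_pos, fun ξ => ?_⟩
    have : ξ = 0 := by
      by_contra h0
      have : (‖ξ‖⁻¹ • ξ) ∈ sphere (0 : En n) 1 := by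
        simp [norm_smul, inv_mul_cancel₀ (norm_ne_zero_iff.mpr h0)]
      rw [h] at this
      exact this
    simp [this, N.F_zero]
  · obtain ⟨z, hz, hmin⟩ := (isCompact_sphere (0 : En n) 1).exists_isMinOn h N.F_cont.continuousOn
    have hz0 : z ≠ 0 := by
      rintro rfl
      simp at hz
    refine ⟨N.F z, N.pos z hz0, fun ξ => ?_⟩
    by_cases h0 : ξ = 0
    · simp [h0, N.F_zero]
    have hn : 0 < ‖ξ‖ := norm_pos_iff.mpr h0
    have hm : (‖ξ‖⁻¹ • ξ) ∈ sphere (0 : En n) 1 := by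
      simp [norm_smul, inv_mul_cancel₀ hn.ne']
    have h1 : N.F z ≤ N.F (‖ξ‖⁻¹ • ξ) := hmin hm
    rw [N.homog _ (by positivity), ← div_eq_inv_mul, le_div_iff₀ hn] at h1
    exact h1

lemma exists_upper : ∃ C : ℝ, 0 < C ∧ ∀ ξ : En n, N.F ξ ≤ C * ‖ξ‖ := by
  obtain ⟨C, hC⟩ := (isCompact_sphere (0 : En n) 1).bddAbove_image N.F_cont.continuousOn
  refine ⟨max C 1, by positivity, fun ξ => ?_⟩
  by_cases h0 : ξ = 0
  · simp [h0, N.F_zero]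
  have hn : 0 < ‖ξ‖ := norm_pos_iff.mpr h0
  have hm : (‖ξ‖⁻¹ • ξ) ∈ sphere (0 : En n) 1 := by
    simp [norm_smul, inv_mul_cancel₀ hn.ne']
  have h1 : N.F (‖ξ‖⁻¹ • ξ) ≤ C := hC (mem_image_of_mem _ hm)
  rw [N.homog _ (by positivity), ← div_eq_inv_mul, div_le_iff₀ hn] at h1
  exact h1.trans (by gcongr; exact le_max_left _ _)

lemma contDiffAt {ξ : En n} (h : ξ ≠ 0) : ContDiffAt ℝ (⊤ : ℕ∞) N.F ξ :=
  N.smooth.contDiffAt (isOpen_compl_singleton.mem_nhds h)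

lemma diffAt {ξ : En n} (h : ξ ≠ 0) : DifferentiableAt ℝ N.F ξ :=
  (N.contDiffAt h).differentiableAt (by simp)

lemma grad_cont {ξ : En n} (h : ξ ≠ 0) : ContinuousAt (gradient N.F) ξ := by
  have h1 : ContinuousAt (fderiv ℝ N.F) ξ :=
    ((N.contDiffAt h).fderiv_right (m := 0) (by exact_mod_cast le_top)).continuousAt
  exact (InnerProductSpace.toDual ℝ (En n)).symm.continuous.continuousAt.comp h1

lemma hasDerivAt_line {ξ : En n} (h : ξ ≠ 0) (η : En n) :
    HasDerivAt (fun t : ℝ => N.F (ξ + t • η)) ⟪gradient N.F ξ, η⟫ 0 := by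
  have h1 : HasFDerivAt N.F (fderiv ℝ N.F ξ) (ξ + (0:ℝ) • η) := by
    simpa using (N.diffAt h).hasFDerivAt
  have h2 : HasDerivAt (fun t : ℝ => ξ + t • η) η 0 := by
    simpa using ((hasDerivAt_id (0:ℝ)).smul_const η).const_add ξ
  have := h1.comp_hasDerivAt (0:ℝ) h2
  rwa [← inner_gradient_left] at this

lemma grad_inner_le {ξ : En n} (h : ξ ≠ 0) (η : En n) : ⟪gradient N.F ξ, η⟫ ≤ N.F η := by
  have h1 := (N.hasDerivAt_line h η).hasDerivWithinAt (s := Ioi 0)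
  rw [hasDerivWithinAt_iff_tendsto_slope' (by simp)] at h1
  refine le_of_tendsto h1 ?_
  filter_upwards [self_mem_nhdsWithin] with t ht
  have ht : 0 < t := ht
  rw [slope_def_field, div_le_iff₀ (by simpa using ht)]
  have := N.F_add_le ξ (t • η)
  rw [N.homog t ht.le] at this
  simp only [zero_smul, add_zero, sub_zero]
  linarith

lemma grad_inner_self {ξ : En n} (h : ξ ≠ 0) : ⟪gradient N.F ξ, ξ⟫ = N.F ξ := by
  refine le_antisymm (N.grad_inner_le h ξ) ?_
  have := N.grad_inner_le h (-ξ)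
  have h1 := N.hasDerivAt_line h ξ
  have h2 : HasDerivAt (fun t : ℝ => N.F (ξ + t • ξ)) (N.F ξ) 0 := by
    have h3 : HasDerivAt (fun t : ℝ => (1 + t) * N.F ξ) (N.F ξ) 0 := by
      simpa using ((hasDerivAt_id (0:ℝ)).const_add 1).mul_const (N.F ξ)
    refine h3.congr_of_eventuallyEq ?_
    filter_upwards [lt_mem_nhds (show (-1:ℝ) < 0 by norm_num)] with t ht
    rw [← N.homog _ (by linarith), add_smul, one_smul]
  exact (h1.unique h2).ge

lemma grad_bdd : ∃ C : ℝ, 0 < C ∧ ∀ ξ : En n, ξ ≠ 0 → ‖gradient N.F ξ‖ ≤ C := by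
  obtain ⟨C, hC, h⟩ := N.exists_upper
  refine ⟨C, hC, fun ξ hξ => ?_⟩
  have h1 := (N.grad_inner_le hξ (gradient N.F ξ)).trans (h _)
  rw [real_inner_self_eq_norm_mul_norm] at h1
  by_contra! h2
  nlinarith [norm_nonneg (gradient N.F ξ)]

/-- Existence of maximizers: characterisation of the polar norm. -/
lemma polar_le (x ξ : En n) : ⟪ξ, x⟫ ≤ polarF N x * N.F ξ := by
  by_cases h : ξ = 0
  · simp [h, N.F_zero]
  rw [← div_le_iff₀ (N.pos ξ h)]
  apply le_csSup
  · obtain ⟨c, hc, hl⟩ := N.exists_lower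
    refine ⟨‖x‖ / c, ?_⟩
    rintro _ ⟨η, hη, rfl⟩
    rw [div_le_div_iff₀ (N.pos η hη) hc]
    have := real_inner_le_norm η x
    nlinarith [hl η, norm_nonneg x, norm_nonneg η]
  · exact ⟨ξ, h, rfl⟩

lemma exists_max (hn : 0 < n) (x : En n) : ∃ ξ : En n, N.F ξ = 1 ∧ ⟪ξ, x⟫ = polarF N x := by
  have : Nontrivial (En n) := by
    have : NeZero n := ⟨hn.ne'⟩
    infer_instance
  obtain ⟨z, hz⟩ := exists_ne (0 : En n)
  have hcpt : IsCompact {ξ : En n | N.F ξ = 1} := by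
    obtain ⟨c, hc, hl⟩ := N.exists_lower
    refine Metric.isCompact_of_isClosed_isBounded (isClosed_eq N.F_cont continuous_const) ?_
    refine (isBounded_closedBall (x := (0 : En n)) (r := 1 / c)).subset fun ξ hξ => ?_
    rw [mem_closedBall_zero_iff, le_div_iff₀ hc, mul_comm]
    exact (hl ξ).trans (le_of_eq hξ)
  have hnorm : ∀ ξ : En n, ξ ≠ 0 → N.F ((N.F ξ)⁻¹ • ξ) = 1 := fun ξ hξ => by
    rw [N.homog _ (inv_nonneg.mpr (N.F_nonneg ξ)), inv_mul_cancel₀ (N.pos ξ hξ).ne']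
  obtain ⟨ξ, hξ, hmax⟩ := hcpt.exists_isMaxOn ⟨_, hnorm z hz⟩
    (f := fun ξ : En n => ⟪ξ, x⟫) (by fun_prop)
  refine ⟨ξ, hξ, le_antisymm ?_ ?_⟩
  · have := N.polar_le x ξ
    rwa [show N.F ξ = 1 from hξ, mul_one] at this
  · unfold polarF
    refine csSup_le ⟨_, z, hz, rfl⟩ ?_
    rintro _ ⟨η, hη, rfl⟩
    have := hmax (hnorm η hη)
    simp only [mem_ofPred_eq, inner_smul_left] at this
    rw [div_eq_inv_mul]
    simpa using this

lemma polar_pos (_hn : 0 < n) {x : En n} (hx : x ≠ 0) : 0 < polarF N x := by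
  have h := N.polar_le x x
  rw [real_inner_self_eq_norm_mul_norm] at h
  have := norm_pos_iff.mpr hx
  by_contra! h'
  nlinarith [N.F_nonneg x, mul_pos this this]

lemma polar_zero (hn : 0 < n) : polarF N 0 = 0 := by
  obtain ⟨ξ, -, h⟩ := N.exists_max hn 0
  simpa using h.symm

lemma max_unique {P : ℝ} (hP : 0 < P) {x ξ η : En n} (hle : ∀ ζ : En n, ⟪ζ, x⟫ ≤ P * N.F ζ)
    (hξ : N.F ξ = 1) (hη : N.F η = 1) (hξx : ⟪ξ, x⟫ = P) (hηx : ⟪η, x⟫ = P) : ξ = η := by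
  by_contra hne
  set d := η - ξ with hd
  have hd0 : d ≠ 0 := sub_ne_zero.mpr (Ne.symm hne)
  have hseg : ∀ t ∈ Ioo (0:ℝ) 1, N.F (ξ + t • d) = 1 := by
    intro t ht
    have e : ξ + t • d = (1 - t) • ξ + t • η := by rw [hd]; module
    refine le_antisymm ?_ ?_
    · have := N.convexOn.2 (mem_univ ξ) (mem_univ η) (by linarith [ht.2] : (0:ℝ) ≤ 1 - t)
        ht.1.le (by ring)
      rw [hξ, hη] at this
      rw [e]
      refine this.trans (le_of_eq ?_)
      simp
    · have := hle (ξ + t • d)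
      rw [e, inner_add_left, inner_smul_left, inner_smul_left, hξx, hηx] at this
      rw [e]
      simp only [conj_trivial] at this
      have h2 : P * 1 ≤ P * N.F ((1 - t) • ξ + t • η) := by linarith
      exact le_of_mul_le_mul_left h2 hP
  set m := ξ + (1/2 : ℝ) • d with hm
  have hm1 : N.F m = 1 := hseg _ (by norm_num)
  have hm0 : ∀ t ∈ Ioo (0:ℝ) 1, ξ + t • d ≠ 0 := fun t ht h => by
    have := hseg t ht
    rw [h, N.F_zero] at this
    norm_num at this
  set G : En n → ℝ := fun y => N.F y ^ 2 / 2 with hG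
  have hGs : ∀ y : En n, y ≠ 0 → ContDiffAt ℝ (⊤ : ℕ∞) G y := fun y hy =>
    ((N.contDiffAt hy).pow 2).div_const 2
  have hline : ∀ t : ℝ, HasDerivAt (fun t : ℝ => ξ + t • d) d t := fun t => by
    simpa using ((hasDerivAt_id t).smul_const d).const_add ξ
  have hDG : ∀ t ∈ Ioo (0:ℝ) 1, fderiv ℝ G (ξ + t • d) d = 0 := by
    intro t ht
    have h1 := (((hGs _ (hm0 t ht)).differentiableAt (by simp)).hasFDerivAt).comp_hasDerivAt t
      (hline t)
    have h2 : HasDerivAt (G ∘ fun t : ℝ => ξ + t • d) 0 t := by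
      refine (hasDerivAt_const t (1/2 : ℝ)).congr_of_eventuallyEq ?_
      filter_upwards [isOpen_Ioo.mem_nhds ht] with s hs
      simp [hG, hseg s hs]
    exact h1.unique h2
  have h2 : DifferentiableAt ℝ (fderiv ℝ G) m :=
    ((hGs m (hm0 _ (by norm_num))).fderiv_right (m := 1) (WithTop.coe_le_coe.2 le_top)).differentiableAt
      (by simp)
  have h3 := h2.hasFDerivAt.comp_hasDerivAt (1/2 : ℝ) (hline (1/2))
  have h4 : HasDerivAt (fun t : ℝ => fderiv ℝ G (ξ + t • d) d)
      (fderiv ℝ (fderiv ℝ G) m d d) (1/2) := by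
    have := h3.clm_apply (hasDerivAt_const (1/2 : ℝ) d)
    simpa using this
  have h5 : HasDerivAt (fun t : ℝ => fderiv ℝ G (ξ + t • d) d) 0 (1/2) := by
    refine (hasDerivAt_const (1/2 : ℝ) (0 : ℝ)).congr_of_eventuallyEq ?_
    filter_upwards [isOpen_Ioo.mem_nhds (show (1/2 : ℝ) ∈ Ioo (0:ℝ) 1 by norm_num)] with s hs
    exact hDG s hs
  have := N.elliptic m (hm0 _ (by norm_num)) d hd0
  exact this.ne' (h4.unique h5)

/-- The maximizer map; gradient of the polar norm. -/
def M (N : MinkowskiNorm n) (hn : 0 < n) (x : En n) : En n := (N.exists_max hn x).choose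

lemma M_F (hn : 0 < n) (x : En n) : N.F (N.M hn x) = 1 := (N.exists_max hn x).choose_spec.1

lemma M_inner (hn : 0 < n) (x : En n) : ⟪N.M hn x, x⟫ = polarF N x :=
  (N.exists_max hn x).choose_spec.2

lemma M_ne (hn : 0 < n) (x : En n) : N.M hn x ≠ 0 := fun h => by
  have := N.M_F hn x
  rw [h, N.F_zero] at this
  norm_num at this

lemma polar_sub_ge (hn : 0 < n) (x y : En n) :
    ⟪N.M hn x, y - x⟫ ≤ polarF N y - polarF N x := by
  have := N.polar_le y (N.M hn x)
  rw [N.M_F, mul_one] at this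
  rw [inner_sub_right, N.M_inner]
  linarith

lemma M_norm_le (hn : 0 < n) : ∃ C : ℝ, 0 < C ∧ ∀ x, ‖N.M hn x‖ ≤ C := by
  obtain ⟨c, hc, hl⟩ := N.exists_lower
  refine ⟨1 / c, by positivity, fun x => ?_⟩
  rw [le_div_iff₀ hc, mul_comm]
  exact (hl _).trans (N.M_F hn x).le

lemma polar_cont (hn : 0 < n) : Continuous (polarF N) := by
  obtain ⟨C, hC, h⟩ := N.M_norm_le hn
  refine (LipschitzWith.of_le_add_mul ⟨C, hC.le⟩ fun x y => ?_).continuous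
  have h1 := N.polar_sub_ge hn x y
  have h2 := abs_real_inner_le_norm (N.M hn x) (y - x)
  have h3 := h x
  rw [dist_comm, dist_eq_norm]
  have h4 : ‖N.M hn x‖ * ‖y - x‖ ≤ C * ‖y - x‖ := by gcongr
  have h5 := neg_abs_le ⟪N.M hn x, y - x⟫
  change _ ≤ _ + C * ‖y - x‖
  linarith

lemma M_cont (hn : 0 < n) {x : En n} (hx : x ≠ 0) : ContinuousAt (N.M hn) x := by
  have hcpt : IsCompact {ξ : En n | N.F ξ = 1} := by
    obtain ⟨c, hc, hl⟩ := N.exists_lower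
    refine Metric.isCompact_of_isClosed_isBounded (isClosed_eq N.F_cont continuous_const) ?_
    refine (isBounded_closedBall (x := (0 : En n)) (r := 1 / c)).subset fun ξ hξ => ?_
    rw [mem_closedBall_zero_iff, le_div_iff₀ hc, mul_comm]
    exact (hl ξ).trans (le_of_eq hξ)
  refine hcpt.tendsto_nhds_of_unique_mapClusterPt (l := 𝓝 x)
    (Eventually.of_forall fun y => N.M_F hn y) ?_
  intro ξ hξ hcl
  refine N.max_unique (N.polar_pos hn hx) (N.polar_le x) hξ (N.M_F hn x) ?_ (N.M_inner hn x)
  -- cluster point passes to the limit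
  by_contra hne
  have hpos : 0 < |⟪ξ, x⟫ - polarF N x| := abs_pos.mpr (sub_ne_zero.mpr hne)
  have hc : Continuous fun q : En n × En n => |⟪q.1, q.2⟫ - polarF N q.2| := by
    have := N.polar_cont hn
    fun_prop
  have hev : ∀ᶠ q in 𝓝 (ξ, x), 0 < |⟪q.1, q.2⟫ - polarF N q.2| :=
    hc.continuousAt.eventually (lt_mem_nhds hpos)
  rw [nhds_prod_eq, eventually_prod_iff] at hev
  obtain ⟨pa, ha, pb, hb, hab⟩ := hev
  have hfr := (mapClusterPt_iff_frequently.mp hcl) {z | pa z} ha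
  obtain ⟨y, hy1, hy2⟩ := (hfr.and_eventually hb).exists
  have := hab hy1 hy2
  simp [N.M_inner] at this

lemma polar_hasGradientAt (hn : 0 < n) {x : En n} (hx : x ≠ 0) :
    HasGradientAt (polarF N) (N.M hn x) x := by
  rw [hasGradientAt_iff_isLittleO]
  rw [Asymptotics.isLittleO_iff]
  intro c hc
  have hM := (Metric.continuousAt_iff'.mp (N.M_cont hn hx)) c hc
  filter_upwards [hM] with y hy
  have h1 := N.polar_sub_ge hn x y
  have h2 := N.polar_sub_ge hn y x
  rw [Real.norm_eq_abs, abs_of_nonneg (by linarith)]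
  have h3 : polarF N y - polarF N x - ⟪N.M hn x, y - x⟫ ≤ ⟪N.M hn y - N.M hn x, y - x⟫ := by
    rw [inner_sub_left]
    have : ⟪N.M hn y, x - y⟫ = - ⟪N.M hn y, y - x⟫ := by rw [← inner_neg_right, neg_sub]
    linarith
  refine h3.trans ((real_inner_le_norm _ _).trans ?_)
  rw [dist_eq_norm] at hy
  gcongr

lemma polar_contDiffOn (hn : 0 < n) : ContDiffOn ℝ 1 (polarF N) {(0 : En n)}ᶜ := by
  have hd : ∀ x : En n, x ≠ 0 → fderiv ℝ (polarF N) x = InnerProductSpace.toDual ℝ _ (N.M hn x) :=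
    fun x hx => (N.polar_hasGradientAt hn hx).hasFDerivAt.fderiv
  have h := (contDiffOn_succ_iff_fderiv_of_isOpen (𝕜 := ℝ) (n := 0) (f := polarF N)
    (isOpen_compl_singleton (x := (0 : En n))))
  rw [zero_add] at h
  rw [h]
  refine ⟨fun x hx => (N.polar_hasGradientAt hn hx).differentiableAt.differentiableWithinAt,
    by simp, ?_⟩
  rw [contDiffOn_zero]
  refine ContinuousOn.congr (f := fun x => InnerProductSpace.toDual ℝ _ (N.M hn x)) ?_ hd
  intro x hx
  exact ((InnerProductSpace.toDual ℝ (En n)).continuous.continuousAt.comp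
    (N.M_cont hn hx)).continuousWithinAt

/-- At the maximizer, `polarF x • ∇F = x`. -/
lemma grad_M (hn : 0 < n) (x : En n) : polarF N x • gradient N.F (N.M hn x) = x := by
  set ξ := N.M hn x with hξ
  have hξ0 : ξ ≠ 0 := N.M_ne hn x
  refine ext_inner_right ℝ fun η => ?_
  have h1 := (N.hasDerivAt_line hξ0 η).const_mul (polarF N x)
  have h2 : HasDerivAt (fun t : ℝ => ⟪ξ + t • η, x⟫) ⟪η, x⟫ 0 := by
    have : HasDerivAt (fun t : ℝ => ⟪ξ, x⟫ + t * ⟪η, x⟫) ⟪η, x⟫ 0 := by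
      simpa using ((hasDerivAt_id (0:ℝ)).mul_const ⟪η, x⟫).const_add ⟪ξ, x⟫
    refine this.congr_of_eventuallyEq (Eventually.of_forall fun t => ?_)
    simp [inner_add_left, inner_smul_left]
  have h3 := h1.sub h2
  have hmin : IsLocalMin ((fun t : ℝ => polarF N x * N.F (ξ + t • η)) - fun t : ℝ => ⟪ξ + t • η, x⟫) 0 := by
    refine Eventually.of_forall fun t => ?_
    have := N.polar_le x (ξ + t • η)
    simp only [Pi.sub_apply, zero_smul, add_zero]
    rw [hξ, N.M_F, N.M_inner]
    linarith
  have := hmin.hasDerivAt_eq_zero h3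
  rw [inner_smul_left, real_inner_comm x η] at *
  simp only [conj_trivial]
  rw [real_inner_comm] at *
  linarith

/-- The flux map. -/
def A (N : MinkowskiNorm n) (p : ℝ) (ξ : En n) : En n := N.F ξ ^ (p - 1) • gradient N.F ξ

lemma grad_smul_pos {c : ℝ} (hc : 0 < c) {ξ : En n} (h : ξ ≠ 0) :
    gradient N.F (c • ξ) = gradient N.F ξ := by
  refine ext_inner_right ℝ fun η => ?_
  have h1 := N.hasDerivAt_line (smul_ne_zero hc.ne' h) (c • η)
  have h2 := (N.hasDerivAt_line h η).const_mul c
  have h3 := h1.congr_of_eventuallyEq (f₁ := fun t : ℝ => c * N.F (ξ + t • η))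
    (Eventually.of_forall fun t => by
      simp only []
      rw [← N.homog c hc.le]
      congr 1
      module)
  have := h3.unique h2
  rw [inner_smul_right] at this
  exact mul_left_cancel₀ hc.ne' this

lemma grad_neg {ξ : En n} (h : ξ ≠ 0) : gradient N.F (-ξ) = - gradient N.F ξ := by
  refine ext_inner_right ℝ fun η => ?_
  have h1 := N.hasDerivAt_line (neg_ne_zero.mpr h) (-η)
  have h2 := (N.hasDerivAt_line h η)
  have h3 := h1.congr_of_eventuallyEq (f₁ := fun t : ℝ => N.F (ξ + t • η))
    (Eventually.of_forall fun t => by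
      simp only []
      rw [← N.even]
      congr 1
      module)
  have := h3.unique h2
  rw [inner_neg_right] at this
  rw [inner_neg_left]
  linarith

lemma A_zero {p : ℝ} (hp : 1 < p) : N.A p 0 = 0 := by
  rw [A, N.F_zero, Real.zero_rpow (by linarith), zero_smul]

lemma A_neg_smul {p : ℝ} (hp : 1 < p) {c : ℝ} (hc : 0 < c) (ξ : En n) :
    N.A p (-(c • ξ)) = -(c ^ (p - 1) • N.A p ξ) := by
  by_cases h : ξ = 0
  · simp [h, N.A_zero hp]
  rw [A, A, N.even, N.homog c hc.le, Real.mul_rpow hc.le (N.F_nonneg ξ),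
    N.grad_neg (smul_ne_zero hc.ne' h), N.grad_smul_pos hc h, smul_neg, mul_smul]

lemma A_inner_self {p : ℝ} (hp : 1 < p) (ξ : En n) : ⟪N.A p ξ, ξ⟫ = N.F ξ ^ p := by
  by_cases h : ξ = 0
  · rw [h, N.F_zero, Real.zero_rpow (by linarith)]; simp
  rw [A, inner_smul_left, N.grad_inner_self h]
  simp only [conj_trivial]
  rw [Real.rpow_sub_one (N.pos ξ h).ne', div_mul_cancel₀ _ (N.pos ξ h).ne']

lemma A_inner_le {p : ℝ} (hp : 1 < p) (ξ η : En n) :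
    ⟪N.A p ξ, η⟫ ≤ N.F ξ ^ (p - 1) * N.F η := by
  by_cases h : ξ = 0
  · rw [h, N.A_zero hp, N.F_zero, Real.zero_rpow (by linarith)]; simp
  rw [A, inner_smul_left]
  simp only [conj_trivial]
  have := N.grad_inner_le h η
  have := Real.rpow_nonneg (N.F_nonneg ξ) (p - 1)
  gcongr

lemma A_cont {p : ℝ} (hp : 1 < p) : Continuous (N.A p) := by
  rw [continuous_iff_continuousAt]
  intro ξ
  by_cases h : ξ = 0
  · obtain ⟨C, hC, hb⟩ := N.grad_bdd
    rw [h, ContinuousAt, N.A_zero hp]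
    have hlim : Tendsto (fun η => N.F η ^ (p - 1) * C) (𝓝 0) (𝓝 0) := by
      have : Continuous fun η => N.F η ^ (p - 1) * C :=
        (N.F_cont.rpow_const (fun _ => Or.inr (by linarith))).mul continuous_const
      have h2 := this.tendsto 0
      rwa [N.F_zero, Real.zero_rpow (by linarith), zero_mul] at h2
    refine squeeze_zero_norm (fun η => ?_) hlim
    by_cases h' : η = 0
    · rw [h', N.A_zero hp, N.F_zero, Real.zero_rpow (by linarith)]; simp
    have h0 := Real.rpow_nonneg (N.F_nonneg η) (p - 1)
    rw [A, norm_smul, Real.norm_of_nonneg h0]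
    have := hb η h'
    gcongr
  · exact ((N.F_cont.rpow_const (fun _ => Or.inr (by linarith))).continuousAt).smul (N.grad_cont h)

lemma rpow_mono_aux {p a b : ℝ} (hp : 1 < p) (ha : 0 ≤ a) (hb : 0 ≤ b) :
    0 ≤ (a ^ (p - 1) - b ^ (p - 1)) * (a - b) ∧
    ((a ^ (p - 1) - b ^ (p - 1)) * (a - b) = 0 → a = b) := by
  rcases lt_trichotomy a b with h | h | h
  · have := Real.rpow_lt_rpow ha h (by linarith : 0 < p - 1)
    have : 0 < (a ^ (p - 1) - b ^ (p - 1)) * (a - b) := mul_pos_of_neg_of_neg (by linarith) (by linarith)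
    exact ⟨this.le, fun h => absurd h this.ne'⟩
  · simp [h]
  · have := Real.rpow_lt_rpow hb h (by linarith : 0 < p - 1)
    have : 0 < (a ^ (p - 1) - b ^ (p - 1)) * (a - b) := mul_pos (by linarith) (by linarith)
    exact ⟨this.le, fun h => absurd h this.ne'⟩

lemma A_mono {p : ℝ} (hp : 1 < p) (ξ η : En n) :
    0 ≤ ⟪N.A p ξ - N.A p η, ξ - η⟫ ∧ (⟪N.A p ξ - N.A p η, ξ - η⟫ = 0 → ξ = η) := by
  have e : ⟪N.A p ξ - N.A p η, ξ - η⟫ =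
      N.F ξ ^ p + N.F η ^ p - ⟪N.A p ξ, η⟫ - ⟪N.A p η, ξ⟫ := by
    rw [inner_sub_left, inner_sub_right, inner_sub_right, N.A_inner_self hp, N.A_inner_self hp]
    ring
  have h1 := N.A_inner_le hp ξ η
  have h2 := N.A_inner_le hp η ξ
  have hpw : ∀ a : ℝ, 0 ≤ a → a ^ p = a ^ (p - 1) * a := fun a ha => by
    rcases ha.eq_or_lt with h | h
    · rw [← h, Real.zero_rpow (by linarith)]; simp
    · rw [Real.rpow_sub_one h.ne', div_mul_cancel₀ _ h.ne']
  obtain ⟨h3, h4⟩ := rpow_mono_aux hp (N.F_nonneg ξ) (N.F_nonneg η)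
  have e2 := hpw _ (N.F_nonneg ξ)
  have e3 := hpw _ (N.F_nonneg η)
  refine ⟨by rw [e]; nlinarith, fun h0 => ?_⟩
  rw [e] at h0
  have hab : N.F ξ = N.F η := h4 (by nlinarith)
  by_cases hξ : ξ = 0
  · rw [hξ, N.F_zero] at hab
    rw [hξ, N.F_eq_zero hab.symm]
  have hFp := N.pos ξ hξ
  have h5 : ⟪N.A p ξ, η⟫ = N.F ξ ^ (p - 1) * N.F η := by
    rw [← hab] at h0 h1 h2 e3 ⊢
    nlinarith
  rw [A, inner_smul_left] at h5
  simp only [conj_trivial] at h5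
  have h6 : ⟪gradient N.F ξ, η⟫ = N.F η :=
    mul_left_cancel₀ (Real.rpow_pos_of_pos hFp _).ne' h5
  have h7 := N.grad_inner_self hξ
  have hi : (0:ℝ) ≤ (N.F ξ)⁻¹ := inv_nonneg.mpr hFp.le
  have := N.max_unique (P := 1) one_pos (x := gradient N.F ξ) (ξ := (N.F ξ)⁻¹ • ξ)
    (η := (N.F ξ)⁻¹ • η)
    (fun ζ => by rw [one_mul, real_inner_comm]; exact N.grad_inner_le hξ ζ)
    (by rw [N.homog _ hi, inv_mul_cancel₀ hFp.ne'])
    (by rw [N.homog _ hi, ← hab, inv_mul_cancel₀ hFp.ne'])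
    (by rw [inner_smul_left, real_inner_comm, h7]; simp [hFp.ne'])
    (by rw [inner_smul_left, real_inner_comm, h6, ← hab]; simp [hFp.ne'])
  exact smul_right_injective _ (inv_ne_zero hFp.ne') this

end MinkowskiNorm


/-- `C¹` test functions. -/
def IsC1Test {n : ℕ} (Ω : Set (En n)) (ψ : En n → ℝ) : Prop :=
  ContDiff ℝ 1 ψ ∧ HasCompactSupport ψ ∧ tsupport ψ ⊆ Ω

section
variable {n : ℕ}

open scoped Convolution in
lemma exists_smooth_approx {Ω : Set (En n)} (hΩ : IsOpen Ω) {φ : En n → ℝ}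
    (hφ : IsC1Test Ω φ) : ∃ K : Set (En n), IsCompact K ∧ K ⊆ Ω ∧ tsupport φ ⊆ K ∧
    ∀ δ : ℝ, 0 < δ → ∃ ψ : En n → ℝ, ContDiff ℝ (⊤ : ℕ∞) ψ ∧ tsupport ψ ⊆ K ∧
      (∀ y, |ψ y - φ y| ≤ δ) ∧ ∀ y V, |fderiv ℝ ψ y V - fderiv ℝ φ y V| ≤ δ * ‖V‖ := by
  obtain ⟨hC, hcs, hsub⟩ := hφ
  obtain ⟨ε, hε, hεΩ⟩ := IsCompact.exists_cthickening_subset_open hcs hΩ hsub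
  refine ⟨cthickening ε (tsupport φ), IsCompact.cthickening hcs, hεΩ,
    self_subset_cthickening _, fun δ hδ => ?_⟩
  have hu1 := hcs.uniformContinuous_of_continuous hC.continuous
  have hu2 := (hcs.fderiv (𝕜 := ℝ)).uniformContinuous_of_continuous
    (hC.continuous_fderiv one_ne_zero)
  obtain ⟨s1, hs1, h1⟩ := Metric.uniformContinuous_iff.mp hu1 δ hδ
  obtain ⟨s2, hs2, h2⟩ := Metric.uniformContinuous_iff.mp hu2 δ hδ
  set s := min ε (min s1 s2) with hs
  have hspos : 0 < s := lt_min hε (lt_min hs1 hs2)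
  let f : ContDiffBump (0 : En n) := ⟨s / 2, s, by linarith, by linarith⟩
  have hLI : LocallyIntegrable (f.normed volume) (volume : Measure (En n)) :=
    f.continuous_normed.locallyIntegrable
  refine ⟨f.normed volume ⋆[ContinuousLinearMap.lsmul ℝ ℝ, volume] φ, ?_, ?_, ?_, ?_⟩
  · exact f.hasCompactSupport_normed.contDiff_convolution_left _ f.contDiff_normed
      hC.continuous.locallyIntegrable
  · refine closure_minimal ?_ isClosed_cthickening
    refine (support_convolution_subset_swap _).trans ?_
    rintro _ ⟨a, ha, b, hb, rfl⟩
    rw [f.support_normed_eq] at hb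
    refine thickening_subset_cthickening _ _ ?_
    rw [mem_thickening_iff]
    refine ⟨a, subset_tsupport _ ha, ?_⟩
    have hb : dist b 0 < s := hb
    have : dist (a + b) a = dist b 0 := by simp [dist_eq_norm]
    exact this.trans_lt (hb.trans_le (min_le_left _ _))
  · intro y
    refine f.dist_normed_convolution_le hC.continuous.aestronglyMeasurable fun z hz => ?_
    have hz : dist z y < s := hz
    exact (h1 (hz.trans_le ((min_le_right _ _).trans (min_le_left _ _)))).le
  · intro y V
    rw [(hcs.hasFDerivAt_convolution_right (ContinuousLinearMap.lsmul ℝ ℝ) hLI hC y).fderiv,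
      convolution_precompR_apply _ hLI (hcs.fderiv (𝕜 := ℝ)) (hC.continuous_fderiv one_ne_zero)]
    refine f.dist_normed_convolution_le (g := fun a => fderiv ℝ φ a V)
      ((hC.continuous_fderiv one_ne_zero).clm_apply continuous_const).aestronglyMeasurable
      fun z hz => ?_
    have hz : dist z y < s := hz
    have := (h2 (hz.trans_le ((min_le_right _ _).trans (min_le_right _ _)))).le
    rw [dist_eq_norm] at this ⊢
    have h3 := (fderiv ℝ φ z - fderiv ℝ φ y).le_opNorm V
    simp only [sub_apply] at h3
    exact h3.trans (by gcongr)

lemma integrable_of_zero_off {K : Set (En n)} (hK : IsCompact K) {g : En n → ℝ}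
    (hg : ContinuousOn g K) (h0 : ∀ y, y ∉ K → g y = 0) : Integrable g := by
  have := hg.integrableOn_compact hK (μ := volume)
  rwa [integrableOn_iff_integrable_of_support_subset] at this
  intro y hy
  by_contra h
  exact hy (h0 y h)

lemma grad_zero_off {φ : En n → ℝ} {K : Set (En n)} (hK : tsupport φ ⊆ K) {y : En n}
    (hy : y ∉ K) : φ y = 0 ∧ gradient φ y = 0 := by
  refine ⟨image_eq_zero_of_notMem_tsupport fun h => hy (hK h), ?_⟩
  have : fderiv ℝ φ y = 0 := by
    by_contra h
    exact hy (hK (support_fderiv_subset ℝ h))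
  simp [gradient, this]

lemma gradient_continuous {φ : En n → ℝ} (h : ContDiff ℝ 1 φ) : Continuous (gradient φ) :=
  (InnerProductSpace.toDual ℝ (En n)).symm.continuous.comp (h.continuous_fderiv one_ne_zero)

lemma gradient_continuousOn {φ : En n → ℝ} {Ω : Set (En n)} (hΩ : IsOpen Ω)
    (h : ContDiffOn ℝ 1 φ Ω) : ContinuousOn (gradient φ) Ω :=
  (InnerProductSpace.toDual ℝ (En n)).symm.continuous.comp_continuousOn
    (h.continuousOn_fderiv_of_isOpen hΩ le_rfl)

lemma extend_weak {Ω : Set (En n)} (hΩ : IsOpen Ω) {B : En n → En n} {h : En n → ℝ}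
    (hB : ContinuousOn B Ω) (hh : ContinuousOn h Ω)
    (hsol : ∀ ψ, IsTestFun Ω ψ → ∫ x in Ω, ⟪B x, gradient ψ x⟫ = - ∫ x in Ω, h x * ψ x)
    {φ : En n → ℝ} (hφ : IsC1Test Ω φ) :
    ∫ x in Ω, (⟪B x, gradient φ x⟫ + h x * φ x) = 0 := by
  obtain ⟨K, hK, hKΩ, hφK, happ⟩ := exists_smooth_approx hΩ hφ
  have hIntg : ∀ ψ : En n → ℝ, ContDiff ℝ 1 ψ → tsupport ψ ⊆ K →
      Integrable (fun x => ⟪B x, gradient ψ x⟫) ∧ Integrable (fun x => h x * ψ x) := by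
    intro ψ hψ hs
    constructor
    · refine integrable_of_zero_off hK ((hB.mono hKΩ).inner (gradient_continuous hψ).continuousOn)
        fun y hy => ?_
      rw [(grad_zero_off hs hy).2, inner_zero_right]
    · refine integrable_of_zero_off hK ((hh.mono hKΩ).mul hψ.continuous.continuousOn)
        fun y hy => ?_
      rw [(grad_zero_off hs hy).1, mul_zero]
  set C := ∫ x in K, (‖B x‖ + |h x|) with hCdef
  have hCint : IntegrableOn (fun x => ‖B x‖ + |h x|) K :=
    (((hB.mono hKΩ).norm).add ((hh.mono hKΩ).abs)).integrableOn_compact hK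
  have hKm : MeasurableSet K := hK.isClosed.measurableSet
  have hC0 : 0 ≤ C := setIntegral_nonneg hKm fun x _ => by positivity
  have key : ∀ δ : ℝ, 0 < δ → |∫ x in Ω, (⟪B x, gradient φ x⟫ + h x * φ x)| ≤ δ * C := by
    intro δ hδ
    obtain ⟨ψ, hψ, hψK, e1, e2⟩ := happ δ hδ
    have hψ1 : ContDiff ℝ 1 ψ := hψ.of_le (by exact_mod_cast le_top)
    have hcs : HasCompactSupport ψ := hK.of_isClosed_subset (isClosed_tsupport _) hψK
    have hz := hsol ψ ⟨hψ, hcs, hψK.trans hKΩ⟩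
    obtain ⟨i1, i2⟩ := hIntg ψ hψ1 hψK
    obtain ⟨i3, i4⟩ := hIntg φ hφ.1 hφK
    have hz' : ∫ x in Ω, (⟪B x, gradient ψ x⟫ + h x * ψ x) = 0 := by
      rw [integral_add i1.integrableOn i2.integrableOn, hz]
      ring
    have e3 : ∫ x in Ω, (⟪B x, gradient φ x⟫ + h x * φ x) =
        ∫ x in Ω, ((⟪B x, gradient φ x⟫ + h x * φ x) - (⟪B x, gradient ψ x⟫ + h x * ψ x)) := by
      have := integral_sub (μ := volume.restrict Ω) (i3.add i4).integrableOn (i1.add i2).integrableOn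
      simp only [Pi.add_apply] at this
      rw [this, hz', sub_zero]
    rw [e3, setIntegral_eq_of_subset_of_forall_sdiff_eq_zero hΩ.measurableSet hKΩ, hCdef,
      ← integral_const_mul, ← Real.norm_eq_abs]
    · refine norm_integral_le_of_norm_le (hCint.const_mul δ) ?_
      refine Eventually.of_forall fun x => ?_
      have e4 : (⟪B x, gradient φ x⟫ + h x * φ x) - (⟪B x, gradient ψ x⟫ + h x * ψ x)
          = -(fderiv ℝ ψ x (B x) - fderiv ℝ φ x (B x)) - h x * (ψ x - φ x) := by
        rw [real_inner_comm, inner_gradient_left, real_inner_comm, inner_gradient_left]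
        ring
      rw [e4, Real.norm_eq_abs]
      refine (abs_sub _ _).trans ?_
      rw [abs_neg, abs_mul]
      have := e1 x
      have := e2 x (B x)
      have : |h x| * |ψ x - φ x| ≤ |h x| * δ := by gcongr
      linarith
    · rintro y ⟨-, hy⟩
      have a1 := grad_zero_off hφK hy
      have a2 := grad_zero_off hψK hy
      simp [a1.1, a1.2, a2.1, a2.2]
  have : |∫ x in Ω, (⟪B x, gradient φ x⟫ + h x * φ x)| ≤ 0 := by
    refine le_of_forall_pos_le_add fun ε hε => ?_
    refine (key (ε / (C + 1)) (by positivity)).trans ?_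
    rw [zero_add, div_mul_eq_mul_div, div_le_iff₀ (by positivity)]
    nlinarith
  exact abs_nonpos_iff.mp this

lemma contDiff_of_off {Ω K : Set (En n)} (hΩ : IsOpen Ω) (hK : IsClosed K) (hKΩ : K ⊆ Ω)
    {φ : En n → ℝ} (h : ContDiffOn ℝ 1 φ Ω) (h0 : ∀ y, y ∉ K → φ y = 0) : ContDiff ℝ 1 φ := by
  rw [contDiff_iff_contDiffAt]
  intro y
  by_cases hy : y ∈ K
  · exact h.contDiffAt (hΩ.mem_nhds (hKΩ hy))
  · refine (contDiffAt_const (c := (0:ℝ))).congr_of_eventuallyEq ?_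
    filter_upwards [hK.isOpen_compl.mem_nhds hy] with z hz
    exact h0 z hz

lemma isC1Test_of_off {Ω K : Set (En n)} (hΩ : IsOpen Ω) (hK : IsCompact K) (hKΩ : K ⊆ Ω)
    {φ : En n → ℝ} (h : ContDiffOn ℝ 1 φ Ω) (h0 : ∀ y, y ∉ K → φ y = 0) : IsC1Test Ω φ := by
  have hs : tsupport φ ⊆ K := by
    refine closure_minimal (fun y hy => ?_) hK.isClosed
    by_contra h
    exact hy (h0 y h)
  exact ⟨contDiff_of_off hΩ hK.isClosed hKΩ h h0, hK.of_isClosed_subset (isClosed_tsupport _) hs,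
    hs.trans hKΩ⟩

/-- The `C¹` function `max(t,0)²`. -/
def sqp (t : ℝ) : ℝ := max t 0 ^ 2

lemma sqp_hasDerivAt (t : ℝ) : HasDerivAt sqp (2 * max t 0) t := by
  rw [hasDerivAt_iff_isLittleO]
  have : (fun s => sqp s - sqp t - (s - t) • (2 * max t 0)) =O[𝓝 t] fun s => ‖s - t‖ ^ 2 := by
    refine Asymptotics.IsBigO.of_bound 1 (Eventually.of_forall fun s => ?_)
    simp only [sqp, smul_eq_mul, Real.norm_eq_abs, sq_abs, one_mul, abs_pow]
    rw [abs_le]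
    rcases le_total s 0 with h1 | h1 <;> rcases le_total t 0 with h2 | h2 <;>
      simp only [h1, h2, max_eq_left, max_eq_right] <;> constructor <;> nlinarith
  refine this.trans_isLittleO ?_
  have h2 : (fun s : ℝ => ‖s - t‖ ^ 2) =o[𝓝 t] fun s => s - t := by
    have := (Asymptotics.isLittleO_norm_pow_id (E' := ℝ) one_lt_two)
    have h3 := this.comp_tendsto (k := fun s : ℝ => s - t) (l' := 𝓝 t)
      (by have : Continuous fun s : ℝ => s - t := by fun_prop
          simpa using this.tendsto t)
    exact h3
  exact h2

lemma sqp_contDiff : ContDiff ℝ 1 sqp := by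
  rw [contDiff_one_iff_deriv]
  refine ⟨fun t => (sqp_hasDerivAt t).differentiableAt, ?_⟩
  have : deriv sqp = fun t => 2 * max t 0 := funext fun t => (sqp_hasDerivAt t).deriv
  rw [this]
  fun_prop

lemma comparison (hn : 0 < n) (N : MinkowskiNorm n) {p : ℝ} (hp : 1 < p) {Ω : Set (En n)}
    (hΩ : IsOpen Ω) {v₁ v₂ : En n → ℝ} (h₁ : ContDiffOn ℝ 1 v₁ Ω) (h₂ : ContDiffOn ℝ 1 v₂ Ω)
    (w₁ : ∀ φ, IsC1Test Ω φ → ∫ x in Ω, ⟪N.A p (gradient v₁ x), gradient φ x⟫ = 0)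
    (w₂ : ∀ φ, IsC1Test Ω φ → ∫ x in Ω, ⟪N.A p (gradient v₂ x), gradient φ x⟫ = 0)
    (hK : ∀ ε : ℝ, 0 < ε → ∃ K : Set (En n), IsCompact K ∧ K ⊆ Ω ∧
      ∀ y ∈ Ω, v₂ y + ε ≤ v₁ y → y ∈ K) :
    ∀ y ∈ Ω, v₁ y ≤ v₂ y := by
  classical
  intro y hy
  refine le_of_forall_pos_le_add fun ε hε => ?_
  obtain ⟨K, hKc, hKΩ, hKm⟩ := hK ε hε
  set φ : En n → ℝ := fun z => if z ∈ Ω then sqp (v₁ z - v₂ z - ε) else 0 with hφ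
  have hφΩ : ∀ z ∈ Ω, φ z = sqp (v₁ z - v₂ z - ε) := fun z hz => by simp [hφ, hz]
  have hφC : ContDiffOn ℝ 1 φ Ω := by
    have : ContDiffOn ℝ 1 (fun z => sqp (v₁ z - v₂ z - ε)) Ω :=
      sqp_contDiff.comp_contDiffOn ((h₁.sub h₂).sub contDiffOn_const)
    exact this.congr hφΩ
  have hφ0 : ∀ z, z ∉ K → φ z = 0 := by
    intro z hz
    by_cases hzΩ : z ∈ Ω
    · rw [hφΩ z hzΩ]
      have : ¬ (v₂ z + ε ≤ v₁ z) := fun h => hz (hKm z hzΩ h)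
      rw [sqp, max_eq_right (by linarith)]
      norm_num
    · simp [hφ, hzΩ]
  have hT := isC1Test_of_off hΩ hKc hKΩ hφC hφ0
  have hts : tsupport φ ⊆ K := by
    refine closure_minimal (fun y hy => ?_) hKc.isClosed
    by_contra h
    exact hy (hφ0 y h)
  have hgrad : ∀ z ∈ Ω, gradient φ z =
      (2 * max (v₁ z - v₂ z - ε) 0) • (gradient v₁ z - gradient v₂ z) := by
    intro z hz
    have d1 := ((h₁.contDiffAt (hΩ.mem_nhds hz)).differentiableAt one_ne_zero).hasFDerivAt
    have d2 := ((h₂.contDiffAt (hΩ.mem_nhds hz)).differentiableAt one_ne_zero).hasFDerivAt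
    have d3 := (sqp_hasDerivAt (v₁ z - v₂ z - ε)).comp_hasFDerivAt z ((d1.sub d2).sub_const ε)
    have d4 : HasFDerivAt φ _ z := d3.congr_of_eventuallyEq (by
      filter_upwards [hΩ.mem_nhds hz] with a ha
      exact hφΩ a ha)
    rw [gradient, d4.fderiv]
    simp [gradient]
  have hg1 := gradient_continuousOn hΩ h₁
  have hg2 := gradient_continuousOn hΩ h₂
  have ha1 : ContinuousOn (fun z => N.A p (gradient v₁ z)) Ω := (N.A_cont hp).comp_continuousOn hg1
  have ha2 : ContinuousOn (fun z => N.A p (gradient v₂ z)) Ω := (N.A_cont hp).comp_continuousOn hg2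
  have hgφ := (gradient_continuous hT.1).continuousOn (s := Ω)
  have i1 : Integrable (fun x => ⟪N.A p (gradient v₁ x), gradient φ x⟫) :=
    integrable_of_zero_off hKc ((ha1.inner hgφ).mono hKΩ) fun z hz => by
      rw [(grad_zero_off hts hz).2, inner_zero_right]
  have i2 : Integrable (fun x => ⟪N.A p (gradient v₂ x), gradient φ x⟫) :=
    integrable_of_zero_off hKc ((ha2.inner hgφ).mono hKΩ) fun z hz => by
      rw [(grad_zero_off hts hz).2, inner_zero_right]
  set g : En n → ℝ := fun x => ⟪N.A p (gradient v₁ x), gradient φ x⟫ -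
    ⟪N.A p (gradient v₂ x), gradient φ x⟫ with hg
  have hgi : Integrable g := i1.sub i2
  have hg0 : ∫ x in Ω, g x = 0 := by
    rw [hg, integral_sub i1.integrableOn i2.integrableOn, w₁ φ hT, w₂ φ hT, sub_zero]
  have hge : ∀ z ∈ Ω, g z = (2 * max (v₁ z - v₂ z - ε) 0) *
      ⟪N.A p (gradient v₁ z) - N.A p (gradient v₂ z), gradient v₁ z - gradient v₂ z⟫ := by
    intro z hz
    simp only [hg]
    rw [← inner_sub_left, hgrad z hz, inner_smul_right]
  have hgn : ∀ z ∈ Ω, 0 ≤ g z := fun z hz => by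
    rw [hge z hz]
    exact mul_nonneg (by positivity) (N.A_mono hp _ _).1
  have hae : g =ᵐ[volume.restrict Ω] 0 := by
    rw [← setIntegral_eq_zero_iff_of_nonneg_ae ?_ hgi.integrableOn]
    · exact hg0
    · exact (ae_restrict_iff' hΩ.measurableSet).mpr (Eventually.of_forall hgn)
  have hz0 : EqOn g 0 Ω := Measure.eqOn_open_of_ae_eq hae hΩ
    ((ha1.inner hgφ).sub (ha2.inner hgφ)) continuousOn_const
  have hgz : ∀ z, fderiv ℝ φ z = 0 := by
    intro z
    have : gradient φ z = 0 := by
      by_cases hz : z ∈ Ω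
      · have h3 := hz0 hz
        rw [hge z hz] at h3
        rw [hgrad z hz]
        rcases mul_eq_zero.mp h3 with h | h
        · rw [h, zero_smul]
        · rw [(N.A_mono hp _ _).2 h, sub_self, smul_zero]
      · exact (grad_zero_off hts fun h => hz (hKΩ h)).2
    rw [← toDual_gradient, this, map_zero]
  have hconst := is_const_of_fderiv_eq_zero (hT.1.differentiable one_ne_zero) hgz
  have hnt : Nontrivial (En n) := by
    have : NeZero n := ⟨hn.ne'⟩
    infer_instance
  have hnc : NoncompactSpace (En n) := NormedSpace.noncompactSpace ℝ _
  obtain ⟨z, hz⟩ : ∃ z, z ∉ K := by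
    by_contra! h
    exact hKc.ne_univ (eq_univ_of_forall h)
  have h5 := hconst y z
  rw [hφ0 z hz, hφΩ y hy, sqp] at h5
  have h6 := pow_eq_zero_iff (two_ne_zero) |>.mp h5
  have := le_max_left (v₁ y - v₂ y - ε) 0
  linarith

lemma radial_integral {k : En n → ℝ} (hk : ContDiff ℝ 1 k) (hcs : HasCompactSupport k)
    (x₀ : En n) : ∫ y, ((n : ℝ) * k y + fderiv ℝ k y (y - x₀)) = 0 := by
  have hkc := hk.continuous
  have hfc := hk.continuous_fderiv one_ne_zero
  let c : Fin n → En n → ℝ := fun i y => k y * (y - x₀) i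
  have hcoord : ∀ i, ContDiff ℝ 1 (fun y : En n => (y - x₀) i) := fun i => by
    have : ContDiff ℝ 1 (fun y : En n => y - x₀) := contDiff_id.sub contDiff_const
    exact (EuclideanSpace.proj (𝕜 := ℝ) i).contDiff.comp this
  have hc : ∀ i, ContDiff ℝ 1 (c i) := fun i => hk.mul (hcoord i)
  have hccs : ∀ i, HasCompactSupport (c i) := fun i => hcs.mul_right
  let e : Fin n → En n := fun i => EuclideanSpace.single i 1
  have hIntg : ∀ i, Integrable (fun y => fderiv ℝ (c i) y (e i)) := fun i =>
    (((hc i).continuous_fderiv one_ne_zero).clm_apply continuous_const).integrable_of_hasCompactSupport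
      (((hccs i).fderiv (𝕜 := ℝ)).mono fun y hy h => by
        apply hy
        simp [h])
  have hz : ∀ i, ∫ y, fderiv ℝ (c i) y (e i) = 0 := by
    intro i
    have := integral_mul_fderiv_eq_neg_fderiv_mul_of_integrable (μ := (volume : Measure (En n)))
      (f := c i) (g := fun _ => (1:ℝ)) (v := e i) (by simpa using hIntg i) (by simp)
      (by simpa using (hc i).continuous.integrable_of_hasCompactSupport (hccs i))
      (fun x _ => (hc i).differentiable one_ne_zero x) (fun x _ => by fun_prop)
    simpa using this
  have hsum : ∀ y, (n : ℝ) * k y + fderiv ℝ k y (y - x₀) = ∑ i, fderiv ℝ (c i) y (e i) := by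
    intro y
    have hd : ∀ i, fderiv ℝ (c i) y (e i) = k y + (y - x₀) i * fderiv ℝ k y (e i) := by
      intro i
      have d1 := (hk.differentiable one_ne_zero y).hasFDerivAt
      have d2 : HasFDerivAt (fun y : En n => (y - x₀) i) (EuclideanSpace.proj (𝕜 := ℝ) i) y := by
        have := (EuclideanSpace.proj (𝕜 := ℝ) i).hasFDerivAt.comp y
          ((hasFDerivAt_id (𝕜 := ℝ) y).sub_const x₀)
        exact this
      have d3 : HasFDerivAt (c i) _ y := d1.mul d2
      rw [d3.fderiv]
      simp [e]
    simp_rw [hd]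
    rw [Finset.sum_add_distrib]
    simp only [Finset.sum_const, Finset.card_univ, Fintype.card_fin, nsmul_eq_mul]
    congr 1
    have hdec : y - x₀ = ∑ i, (y - x₀) i • e i := by
      ext j
      simp [e, Pi.single_apply]
    conv_lhs => rw [hdec]
    simp
  simp_rw [hsum]
  rw [integral_finsetSum _ (fun i _ => hIntg i)]
  simp [hz]

end


section
variable {n : ℕ}

lemma normal_dir {f φ : En n → ℝ} {x : En n} (hf : DifferentiableAt ℝ f x) (hf0 : f x = 0)
    (hdf : fderiv ℝ f x ≠ 0) (hφ : DifferentiableAt ℝ φ x) (hφ0 : φ x = 0)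
    (hpos : ∀ y, f y < 0 → 0 ≤ φ y) : ∃ l : ℝ, 0 ≤ l ∧ gradient φ x = l • (-gradient f x) := by
  have hline : ∀ (g : En n → ℝ) (_ : DifferentiableAt ℝ g x) (e : En n),
      Tendsto (slope (fun t : ℝ => g (x + t • e)) 0) (𝓝[>] 0) (𝓝 ⟪gradient g x, e⟫) := by
    intro g hg e
    have h1 : HasFDerivAt g (fderiv ℝ g x) (x + (0:ℝ) • e) := by
      simpa using hg.hasFDerivAt
    have h2 : HasDerivAt (fun t : ℝ => x + t • e) e 0 := by
      simpa using ((hasDerivAt_id (0:ℝ)).smul_const e).const_add x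
    have h3 := (h1.comp_hasDerivAt (0:ℝ) h2).hasDerivWithinAt (s := Ioi 0)
    rw [hasDerivWithinAt_iff_tendsto_slope' (by simp), ← inner_gradient_left] at h3
    exact h3
  have key : ∀ e : En n, 0 < ⟪-gradient f x, e⟫ → 0 ≤ ⟪gradient φ x, e⟫ := by
    intro e he
    rw [inner_neg_left] at he
    have h1 := (hline f hf e).eventually (gt_mem_nhds (show ⟪gradient f x, e⟫ < 0 by linarith))
    refine ge_of_tendsto (hline φ hφ e) ?_
    filter_upwards [h1, self_mem_nhdsWithin] with t ht ht0
    have ht0 : 0 < t := ht0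
    rw [slope_def_field] at ht ⊢
    simp only [zero_smul, add_zero, sub_zero, hf0, hφ0] at ht ⊢
    have : f (x + t • e) < 0 := by
      by_contra! h
      exact absurd ht (not_lt.mpr (div_nonneg h ht0.le))
    exact div_nonneg (hpos _ this) ht0.le
  set ν := -gradient f x with hν
  have hν0 : ν ≠ 0 := by
    intro h
    apply hdf
    have h' : gradient f x = 0 := neg_eq_zero.mp h
    rw [← toDual_gradient, h', map_zero]
  have hνp : 0 < ⟪ν, ν⟫ := real_inner_self_pos.mpr hν0
  set g := gradient φ x with hg
  set l := ⟪g, ν⟫ / ⟪ν, ν⟫ with hl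
  have hl0 : 0 ≤ l := div_nonneg (key ν hνp) hνp.le
  refine ⟨l, hl0, ?_⟩
  set h := g - l • ν with hh
  have hhν : ⟪ν, h⟫ = 0 := by
    rw [hh, inner_sub_right, inner_smul_right, real_inner_comm, hl, div_mul_cancel₀ _ hνp.ne',
      sub_self]
  have hgh : ⟪g, h⟫ = ⟪h, h⟫ := by
    have : g = h + l • ν := by rw [hh]; abel
    conv_lhs => rw [this]
    rw [inner_add_left, inner_smul_left, hhν]
    simp
  by_contra hne
  have hh0 : h ≠ 0 := fun h0 => hne (sub_eq_zero.mp h0)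
  have hhp : 0 < ⟪h, h⟫ := real_inner_self_pos.mpr hh0
  have := key (ν - ((⟪g, ν⟫ + 1) / ⟪h, h⟫) • h) (by
    rw [inner_sub_right, inner_smul_right, hhν]
    simpa using hνp)
  rw [inner_sub_right, inner_smul_right, hgh, div_mul_cancel₀ _ hhp.ne'] at this
  linarith

/-- The exponential transform of a weak solution is `p`-harmonic. -/
lemma exp_weak (N : MinkowskiNorm n) {p : ℝ} (hp : 1 < p) {Ω : Set (En n)} (hΩ : IsOpen Ω)
    {u : En n → ℝ} (hu : ContDiffOn ℝ 1 u Ω) (hsol : IsWeakPSol N Ω p u)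
    {φ : En n → ℝ} (hφ : IsC1Test Ω φ) :
    ∫ x in Ω, ⟪N.A p (gradient (fun y => Real.exp (-u y / (p - 1))) x), gradient φ x⟫ = 0 := by
  have hp0 : 0 < p - 1 := by linarith
  have hg := gradient_continuousOn hΩ hu
  have hB : ContinuousOn (fun z => N.A p (gradient u z)) Ω := (N.A_cont hp).comp_continuousOn hg
  have hh : ContinuousOn (fun z => N.F (gradient u z) ^ p) Ω :=
    (N.F_cont.rpow_const (fun _ => Or.inr (by linarith))).comp_continuousOn hg
  have hψ : IsC1Test Ω (fun y => Real.exp (-u y) * φ y) := by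
    refine isC1Test_of_off hΩ hφ.2.1 hφ.2.2 (hu.neg.exp.mul hφ.1.contDiffOn) fun y hy => ?_
    rw [image_eq_zero_of_notMem_tsupport hy, mul_zero]
  have h1 := extend_weak hΩ hB hh (fun ψ hψ => by
    rw [← hsol ψ hψ]
    congr 1
    ext x
    simp [MinkowskiNorm.A]) hψ
  have hgu : ∀ x ∈ Ω, DifferentiableAt ℝ u x := fun x hx =>
    (hu.contDiffAt (hΩ.mem_nhds hx)).differentiableAt one_ne_zero
  have h2 : ∫ x in Ω, ⟪N.A p (gradient (fun y => Real.exp (-u y / (p - 1))) x), gradient φ x⟫ =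
      ∫ x in Ω, (-((1 / (p - 1)) ^ (p - 1))) * (⟪N.A p (gradient u x),
        gradient (fun y => Real.exp (-u y) * φ y) x⟫ +
        N.F (gradient u x) ^ p * (Real.exp (-u x) * φ x)) := by
    refine setIntegral_congr_fun hΩ.measurableSet fun x hx => ?_
    have d := (hgu x hx).hasFDerivAt
    have dφ := (hφ.1.differentiable one_ne_zero x).hasFDerivAt
    have e1 : gradient (fun y => Real.exp (-u y / (p - 1))) x =
        -((1 / (p - 1) * Real.exp (-u x / (p - 1))) • gradient u x) := by
      have d1 : HasFDerivAt (fun y => Real.exp (-u y / (p - 1))) _ x :=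
        (d.neg.mul_const ((p - 1)⁻¹)).exp
      rw [gradient, d1.fderiv]
      simp [gradient, smul_smul, div_eq_mul_inv, mul_comm]
    have e2 : gradient (fun y => Real.exp (-u y) * φ y) x =
        Real.exp (-u x) • gradient φ x - (φ x * Real.exp (-u x)) • gradient u x := by
      have d1 : HasFDerivAt (fun y => Real.exp (-u y) * φ y) _ x := d.neg.exp.mul dφ
      rw [gradient, d1.fderiv]
      simp [gradient, smul_smul, sub_eq_add_neg]
    have e3 : (1 / (p - 1) * Real.exp (-u x / (p - 1))) ^ (p - 1) =
        (1 / (p - 1)) ^ (p - 1) * Real.exp (-u x) := by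
      rw [Real.mul_rpow (by positivity) (Real.exp_pos _).le, ← Real.exp_mul,
        div_mul_cancel₀ _ hp0.ne']
    rw [e1, e2, N.A_neg_smul hp (by positivity), e3, inner_neg_left, inner_smul_left,
      inner_sub_right, inner_smul_right, inner_smul_right, N.A_inner_self hp]
    simp only [conj_trivial]
    ring
  rw [h2, integral_const_mul, h1, mul_zero]

/-- The radial barrier is `p`-harmonic away from its center. -/
lemma barrier_weak (hn : 0 < n) (N : MinkowskiNorm n) {p : ℝ} (hp : 1 < p) (hpn : p < n)
    {Ω : Set (En n)} (hΩ : IsOpen Ω) {x₀ : En n} (hx₀ : x₀ ∉ Ω) {r : ℝ} (hr : 0 < r)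
    {φ : En n → ℝ} (hφ : IsC1Test Ω φ) :
    ∫ x in Ω, ⟪N.A p (gradient (fun y => (polarF N (y - x₀) / r) ^ (-((n - p) / (p - 1)))) x),
      gradient φ x⟫ = 0 := by
  have hp0 : 0 < p - 1 := by linarith
  set a : ℝ := (n - p) / (p - 1) with ha
  have ha0 : 0 < a := div_pos (by linarith) hp0
  have hne : ∀ y ∈ Ω, y - x₀ ≠ 0 := fun y hy h => hx₀ (sub_eq_zero.mp h ▸ hy)
  have hPp : ∀ y ∈ Ω, 0 < polarF N (y - x₀) := fun y hy => N.polar_pos hn (hne y hy)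
  have hPd : ∀ y ∈ Ω, HasFDerivAt (fun z => polarF N (z - x₀))
      (InnerProductSpace.toDual ℝ _ (N.M hn (y - x₀))) y := fun y hy => by
    have := (N.polar_hasGradientAt hn (hne y hy)).hasFDerivAt.comp y
      ((hasFDerivAt_id (𝕜 := ℝ) y).sub_const x₀)
    exact this
  have hPC : ContDiffOn ℝ 1 (fun z => polarF N (z - x₀)) Ω :=
    (N.polar_contDiffOn hn).comp (contDiff_id.sub contDiff_const).contDiffOn hne
  set h : En n → ℝ := fun y => polarF N (y - x₀) ^ (-(n : ℝ)) with hh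
  have hhC : ContDiffOn ℝ 1 h Ω := hPC.rpow_const_of_ne fun y hy => (hPp y hy).ne'
  have hk : IsC1Test Ω (fun y => h y * φ y) := by
    refine isC1Test_of_off hΩ hφ.2.1 hφ.2.2 (hhC.mul hφ.1.contDiffOn) fun y hy => ?_
    rw [image_eq_zero_of_notMem_tsupport hy, mul_zero]
  have h1 := radial_integral hk.1 hk.2.1 x₀
  rw [← setIntegral_univ, setIntegral_eq_of_subset_of_forall_sdiff_eq_zero MeasurableSet.univ
    (subset_univ Ω)] at h1
  swap
  · rintro y ⟨-, hy⟩
    have h2 := grad_zero_off (n := n) hk.2.2 hy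
    rw [h2.1, ← inner_gradient_left, h2.2]
    simp
  have h2 : ∫ x in Ω, ⟪N.A p (gradient (fun y => (polarF N (y - x₀) / r) ^ (-a)) x),
      gradient φ x⟫ = ∫ y in Ω, (-((a / r) ^ (p - 1) * r ^ ((n : ℝ) - 1))) *
        ((n : ℝ) * (h y * φ y) + fderiv ℝ (fun y => h y * φ y) y (y - x₀)) := by
    refine setIntegral_congr_fun hΩ.measurableSet fun y hy => ?_
    have hP := hPp y hy
    set P := polarF N (y - x₀) with hPdef
    have d := hPd y hy
    have dφ := (hφ.1.differentiable one_ne_zero y).hasFDerivAt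
    have e1 : gradient (fun y => (polarF N (y - x₀) / r) ^ (-a)) y =
        -((a / r * (P / r) ^ (-a - 1)) • N.M hn (y - x₀)) := by
      have d1 : HasFDerivAt (fun y => (polarF N (y - x₀) / r) ^ (-a)) _ y :=
        (d.mul_const r⁻¹).rpow_const (p := -a) (Or.inl (mul_pos hP (inv_pos.mpr hr)).ne')
      rw [gradient, d1.fderiv]
      simp only [map_smulₛₗ, smul_smul, LinearIsometryEquiv.symm_apply_apply, conj_trivial,
        ← hPdef, div_eq_mul_inv, ← neg_smul]
      congr 1
      ring
    have e2 : fderiv ℝ (fun y => h y * φ y) y (y - x₀) =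
        h y * fderiv ℝ φ y (y - x₀) - n * (h y * φ y) := by
      have dh : HasFDerivAt h _ y := d.rpow_const (p := -(n:ℝ)) (Or.inl hP.ne')
      have d1 : HasFDerivAt (fun y => h y * φ y) _ y := dh.mul dφ
      rw [d1.fderiv]
      simp only [add_apply, smul_apply, InnerProductSpace.toDual_apply_apply, smul_eq_mul,
        N.M_inner, ← hPdef]
      have : h y = P ^ (-(n:ℝ) - 1) * P := by
        rw [Real.rpow_sub_one hP.ne', div_mul_cancel₀ _ hP.ne']
      rw [this]
      ring
    have e3 : (a / r * (P / r) ^ (-a - 1)) ^ (p - 1) * P⁻¹ =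
        ((a / r) ^ (p - 1) * r ^ ((n : ℝ) - 1)) * h y := by
      rw [Real.mul_rpow (by positivity) (by positivity), ← Real.rpow_mul (by positivity)]
      have : (-a - 1) * (p - 1) = -((n:ℝ) - 1) := by
        rw [ha]; field_simp; ring
      rw [this, Real.div_rpow hP.le hr.le, Real.rpow_neg hr.le, div_inv_eq_mul]
      have : h y = P ^ (-((n:ℝ) - 1)) * P⁻¹ := by
        rw [← Real.rpow_neg_one P, ← Real.rpow_add hP]
        simp only [hh, ← hPdef]
        congr 1
        ring
      rw [this]
      ring
    have e4 : N.A p (N.M hn (y - x₀)) = P⁻¹ • (y - x₀) := by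
      rw [MinkowskiNorm.A, N.M_F, Real.one_rpow, one_smul]
      conv_rhs => rw [← N.grad_M hn (y - x₀)]
      rw [← hPdef, smul_smul, inv_mul_cancel₀ hP.ne', one_smul]
    rw [e1, e2, N.A_neg_smul hp (by positivity), e4, smul_smul, e3, inner_neg_left,
      inner_smul_left, real_inner_comm, inner_gradient_left]
    simp only [conj_trivial]
    ring
  rw [h2, integral_const_mul, h1, mul_zero]

lemma polar_tendsto (N : MinkowskiNorm n) (x₀ : En n) :
    Tendsto (fun y => polarF N (y - x₀)) (cocompact (En n)) atTop := by
  obtain ⟨C, hC, hb⟩ := N.exists_upper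
  have h1 : ∀ x : En n, ‖x‖ / C ≤ polarF N x := by
    intro x
    by_cases hx : x = 0
    · rw [hx]
      simp only [norm_zero, zero_div]
      unfold polarF
      apply Real.sSup_nonneg
      rintro _ ⟨ξ, -, rfl⟩
      simp
    have hx' := norm_pos_iff.mpr hx
    have h2 := N.polar_le x x
    rw [real_inner_self_eq_norm_mul_norm] at h2
    have hP : 0 ≤ polarF N x := by
      by_contra! h'
      nlinarith [N.F_nonneg x, mul_pos hx' hx']
    have h3 : ‖x‖ * ‖x‖ ≤ polarF N x * C * ‖x‖ := by nlinarith [hb x]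
    rw [div_le_iff₀ hC]
    exact le_of_mul_le_mul_right h3 hx'
  have h2 : Tendsto (fun y : En n => ‖y - x₀‖ / C) (cocompact (En n)) atTop := by
    refine Tendsto.atTop_div_const hC ?_
    refine tendsto_atTop_mono (f := fun y : En n => ‖y‖ + -‖x₀‖) (fun y => ?_)
      (tendsto_atTop_add_const_right _ _ (tendsto_norm_cocompact_atTop))
    have := norm_sub_norm_le y x₀
    linarith
  exact tendsto_atTop_mono (fun y => h1 _) h2

end

/-- Boundary gradient estimate: if `x ∈ ∂Ω` and there is a Wulff shape
`W_r(x₀) ⊆ Ωᶜ` with `x ∈ ∂W_r(x₀)`, then `F(∇u_p(x)) ≤ (n-p)/r`. -/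
theorem statement12 (n : ℕ) (N : MinkowskiNorm n)
    (Ω : Set (En n)) (hΩ : IsOpen Ω) (hsb : HasSmoothBoundary Ω)
    (hbd : Bornology.IsBounded Ωᶜ)
    (p : ℝ) (hp1 : 1 < p) (hpn : p < n)
    (u : En n → ℝ) (hC1 : ContDiffOn ℝ 1 u (closure Ω))
    (hsol : IsWeakPSol N Ω p u)
    (hbc : ∀ x ∈ frontier Ω, u x = 0)
    (hlim : Tendsto u (cocompact (En n)) atTop)
    (x : En n) (hx : x ∈ frontier Ω)
    (r : ℝ) (hr : 0 < r) (x₀ : En n)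
    (hin : Wulff N r x₀ ⊆ Ωᶜ) (hxW : x ∈ frontier (Wulff N r x₀)) :
    N.F (gradient u x) ≤ (n - p) / r := by
  have hn : 0 < n := by
    have : (0:ℝ) < n := by linarith
    exact_mod_cast this
  have hp0 : 0 < p - 1 := by linarith
  have hnp : 0 < (n:ℝ) - p := by linarith
  by_cases hd : DifferentiableAt ℝ u x
  swap
  · rw [gradient_eq_zero_of_not_differentiableAt hd, N.F_zero]
    positivity
  have hPc : Continuous fun y => polarF N (y - x₀) := (N.polar_cont hn).comp (by fun_prop)
  have hPx : polarF N (x - x₀) = r := frontier_lt_subset_eq hPc continuous_const hxW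
  have hPr : ∀ y ∈ Ω, r ≤ polarF N (y - x₀) := by
    intro y hy
    by_contra! h
    exact hin h hy
  have hPr' : ∀ y ∈ closure Ω, r ≤ polarF N (y - x₀) := by
    have : closure Ω ⊆ {y | r ≤ polarF N (y - x₀)} :=
      closure_minimal hPr (isClosed_le continuous_const hPc)
    exact this
  have hx₀ : x₀ ∉ Ω := fun h => by
    have := hPr x₀ h
    rw [sub_self, N.polar_zero hn] at this
    linarith
  have huΩ : ContDiffOn ℝ 1 u Ω := hC1.mono subset_closure
  set a : ℝ := (n - p) / (p - 1) with ha
  have ha0 : 0 < a := div_pos hnp hp0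
  set vu : En n → ℝ := fun y => Real.exp (-u y / (p - 1)) with hvu
  set vw : En n → ℝ := fun y => (polarF N (y - x₀) / r) ^ (-a) with hvw
  have hne : ∀ y ∈ Ω, y - x₀ ≠ 0 := fun y hy h => hx₀ (sub_eq_zero.mp h ▸ hy)
  have hvuC : ContDiffOn ℝ 1 vu Ω := (huΩ.neg.div_const _).exp
  have hvwC : ContDiffOn ℝ 1 vw Ω := by
    have hPC : ContDiffOn ℝ 1 (fun z => polarF N (z - x₀)) Ω :=
      (N.polar_contDiffOn hn).comp (contDiff_id.sub contDiff_const).contDiffOn hne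
    exact (hPC.div_const r).rpow_const_of_ne fun y hy =>
      (div_pos (hr.trans_le (hPr y hy)) hr).ne'
  have hvuc : ContinuousOn vu (closure Ω) :=
    Real.continuous_exp.comp_continuousOn (hC1.continuousOn.neg.div_const _)
  have hvwc : ContinuousOn vw (closure Ω) :=
    (hPc.continuousOn.div_const r).rpow_const fun y hy =>
      Or.inl (div_pos (hr.trans_le (hPr' y hy)) hr).ne'
  have hfr : ∀ y ∈ closure Ω, y ∉ Ω → vu y = 1 := by
    intro y hy hy'
    have : y ∈ frontier Ω := by
      rw [hΩ.frontier_eq]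
      exact ⟨hy, hy'⟩
    simp [hvu, hbc y this]
  have cmp1 : ∀ y ∈ Ω, vw y ≤ vu y := by
    refine comparison hn N hp1 hΩ hvwC hvuC (fun φ hφ => barrier_weak hn N hp1 hpn hΩ hx₀ hr hφ)
      (fun φ hφ => exp_weak N hp1 hΩ huΩ hsol hφ) fun ε hε => ?_
    have ht : Tendsto vw (cocompact (En n)) (𝓝 0) :=
      (tendsto_rpow_neg_atTop ha0).comp ((polar_tendsto N x₀).atTop_div_const hr)
    obtain ⟨S, hS, hS'⟩ := mem_cocompact.mp (ht.eventually (gt_mem_nhds hε))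
    refine ⟨{y ∈ closure Ω | vu y + ε ≤ vw y}, ?_, ?_, ?_⟩
    · refine hS.of_isClosed_subset
        (isClosed_closure.isClosed_le (hvuc.add continuousOn_const) hvwc) ?_
      rintro y ⟨-, hy⟩
      by_contra h
      have h1 : vw y < ε := hS' h
      have h2 : 0 < vu y := Real.exp_pos _
      linarith
    · rintro y ⟨hy, hy2⟩
      by_contra h
      have h1 := hfr y hy h
      have h2 : vw y ≤ 1 := Real.rpow_le_one_of_one_le_of_nonpos
        ((one_le_div hr).mpr (hPr' y hy)) (by linarith)
      linarith
    · exact fun y hy h => ⟨subset_closure hy, h⟩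
  have cmp2 : ∀ y ∈ Ω, vu y ≤ 1 := by
    refine comparison (v₂ := fun _ => 1) hn N hp1 hΩ hvuC contDiffOn_const
      (fun φ hφ => exp_weak N hp1 hΩ huΩ hsol hφ) (fun φ hφ => ?_) fun ε hε => ?_
    · simp [gradient_fun_const, N.A_zero hp1]
    obtain ⟨S, hS, hS'⟩ := mem_cocompact.mp (hlim.eventually (eventually_ge_atTop 0))
    refine ⟨{y ∈ closure Ω | 1 + ε ≤ vu y}, ?_, ?_, ?_⟩
    · refine hS.of_isClosed_subset
        (isClosed_closure.isClosed_le continuousOn_const hvuc) ?_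
      rintro y ⟨-, hy⟩
      by_contra h
      have h1 : 0 ≤ u y := hS' h
      have h2 : vu y ≤ 1 := Real.exp_le_one_iff.mpr
        (div_nonpos_of_nonpos_of_nonneg (by linarith) hp0.le)
      linarith
    · rintro y ⟨hy, hy2⟩
      by_contra h
      have h1 := hfr y hy h
      linarith
    · exact fun y hy h => ⟨subset_closure hy, h⟩
  have u0 : ∀ y ∈ Ω, 0 ≤ u y := by
    intro y hy
    have h1 := Real.exp_le_one_iff.mp (cmp2 y hy)
    by_contra! h
    exact absurd h1 (not_le.mpr (div_pos (by linarith) hp0))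
  have u1 : ∀ y ∈ Ω, 0 ≤ (n - p) * Real.log (polarF N (y - x₀) / r) - u y := by
    intro y hy
    have hq : 0 < polarF N (y - x₀) / r := div_pos (hr.trans_le (hPr y hy)) hr
    have h1 := Real.log_le_log (Real.rpow_pos_of_pos hq _) (cmp1 y hy)
    rw [Real.log_exp, Real.log_rpow hq, ha, le_div_iff₀ hp0] at h1
    have h2 : -(((n:ℝ) - p) / (p - 1)) * Real.log (polarF N (y - x₀) / r) * (p - 1) =
      -((n - p) * Real.log (polarF N (y - x₀) / r)) := by
      field_simp
    linarith
  -- the boundary point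
  obtain ⟨f, hfs, hfΩ, hfd⟩ := hsb
  have hxΩ : x ∉ Ω := by
    rw [hΩ.frontier_eq] at hx
    exact hx.2
  have hf0 : f x = 0 := by
    refine le_antisymm ?_ ?_
    · have : closure Ω ⊆ {y | f y ≤ 0} :=
        closure_minimal (fun y hy => by
          rw [hfΩ] at hy
          have hy : f y < 0 := hy
          exact hy.le)
          (isClosed_le hfs.continuous continuous_const)
      exact this (frontier_subset_closure hx)
    · by_contra! h
      exact hxΩ (by rw [hfΩ]; exact h)
  have hmem : ∀ y, f y < 0 → y ∈ Ω := fun y hy => by rw [hfΩ]; exact hy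
  have hfdx : DifferentiableAt ℝ f x := (hfs.differentiable (by simp)) x
  have hxne : x - x₀ ≠ 0 := fun h => by
    rw [h, N.polar_zero hn] at hPx
    linarith
  have dP : HasFDerivAt (fun z => polarF N (z - x₀))
      (InnerProductSpace.toDual ℝ _ (N.M hn (x - x₀))) x := by
    have := (N.polar_hasGradientAt hn hxne).hasFDerivAt.comp x
      ((hasFDerivAt_id (𝕜 := ℝ) x).sub_const x₀)
    exact this
  have dw : HasFDerivAt (fun y => (n - p) * Real.log (polarF N (y - x₀) / r) - u y)
      _ x := (((dP.mul_const r⁻¹).log (by rw [hPx]; positivity)).const_mul ((n:ℝ) - p)).sub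
        hd.hasFDerivAt
  obtain ⟨l, hl, hlg⟩ := normal_dir hfdx hf0 (hfd x hx) hd (hbc x hx) fun y hy => u0 y (hmem y hy)
  obtain ⟨m, hm, hmg⟩ := normal_dir hfdx hf0 (hfd x hx) dw.differentiableAt
    (by rw [hPx, div_self hr.ne', Real.log_one, hbc x hx]; simp) fun y hy => u1 y (hmem y hy)
  have hgw : gradient (fun y => (n - p) * Real.log (polarF N (y - x₀) / r) - u y) x =
      ((n - p) / r) • N.M hn (x - x₀) - gradient u x := by
    rw [gradient, dw.fderiv]
    simp only [map_sub, map_smulₛₗ, LinearIsometryEquiv.symm_apply_apply, conj_trivial, hPx,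
      mul_inv_cancel₀ hr.ne', inv_one, one_mul, smul_smul, div_eq_mul_inv, gradient]
  rw [hgw, sub_eq_iff_eq_add, hlg, ← add_smul] at hmg
  have h1 := congrArg N.F hmg
  rw [N.homog _ (by positivity), N.homog _ (by positivity), N.M_F, mul_one] at h1
  rw [hlg, N.homog _ hl, h1]
  have := N.F_nonneg (-gradient f x)
  nlinarith [mul_nonneg hm this]
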